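/- Let G be a finite simple graph, Z a cycle in G, λ : E(G) → ℤ/2 an edge labeling, and B a bridge of G with respect to Z such that for every x ∈ V(B) ∩ V(Z), every proper closed walk in B based at x is trivial (B induces no loop). Then there exists a function f : V(B) ∩ V(Z) → ℤ/2 such that for all x, y ∈ V(B) ∩ V(Z), there exists a nontrivial proper walk in B from x to y if and only if f(x) ≠ f(y). In other words, the pairs of vertices of V(B) ∩ V(Z) joined by a nontrivial proper walk in B form a complete bipartite graph (one of whose parts may be empty). -/

import Mathlib

open SimpleGraph

variable {V : Type*}

/-- The `λ`-value of a walk: the sum in `ℤ/2`, over the edges of the walk counted with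
multiplicity, of their labels. -/
def walkLambda (lam : Sym2 V → ZMod 2) {G : SimpleGraph V} {x y : V} (w : G.Walk x y) :
    ZMod 2 :=
  (w.edges.map lam).sum

/-- `b` can be reached from `a` by a walk in `G` all of whose vertices avoid `Zv`. -/
def ReachAvoiding (G : SimpleGraph V) (Zv : Set V) (a b : V) : Prop :=
  ∃ w : G.Walk a b, ∀ x ∈ w.support, x ∉ Zv

/-- `B` is a bridge of `G` with respect to a cycle with vertex set `Zv` and edge set `Ze`:
either a single edge not of the cycle together with its two endpoints, both on the cycle,
or a connected component of `G − Zv` together with all edges (and their endpoints on the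
cycle) joining it to `Zv`. -/
def IsBridgeOf (G : SimpleGraph V) (Zv : Set V) (Ze : Set (Sym2 V)) (B : G.Subgraph) :
    Prop :=
  (∃ u v, G.Adj u v ∧ s(u, v) ∉ Ze ∧ u ∈ Zv ∧ v ∈ Zv ∧
      B.verts = {u, v} ∧ ∀ a b, B.Adj a b ↔ s(a, b) = s(u, v)) ∨
  (∃ a, a ∉ Zv ∧
      B.verts = {b | ReachAvoiding G Zv a b} ∪
        {z | z ∈ Zv ∧ ∃ c, ReachAvoiding G Zv a c ∧ G.Adj c z} ∧
      ∀ x y, B.Adj x y ↔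
        G.Adj x y ∧ (ReachAvoiding G Zv a x ∨ ReachAvoiding G Zv a y))

/-- `w` is a proper walk lying in the subgraph `B`, with respect to a cycle with vertex
set `Zv` and edge set `Ze`: the walk lies in `B`, none of its vertices lies on the cycle
except possibly its endpoints, and none of its edges is an edge of the cycle. -/
def IsProperWalkIn {G : SimpleGraph V} (B : G.Subgraph) (Zv : Set V) (Ze : Set (Sym2 V))
    {x y : V} (w : G.Walk x y) : Prop :=
  (∀ u ∈ w.support, u ∈ B.verts) ∧ (∀ e ∈ w.edges, e ∈ B.edgeSet) ∧
    (∀ u ∈ w.support, u ∈ Zv → u = x ∨ u = y) ∧ (∀ e ∈ w.edges, e ∉ Ze)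

/-- The set of `λ`-values of proper walks in `B` from `x` to the reference vertex `w`. -/
def labelSet {G : SimpleGraph V} (B : G.Subgraph) (Zv : Set V) (Ze : Set (Sym2 V))
    (lam : Sym2 V → ZMod 2) (x w : V) : Set (ZMod 2) :=
  {t | ∃ ω : G.Walk x w, IsProperWalkIn B Zv Ze ω ∧ walkLambda lam ω = t}

/-- A graph is 2-connected: it has at least three vertices, it is connected, and it
remains connected after the deletion of any single vertex. -/
def TwoConnected (G : SimpleGraph V) : Prop :=
  3 ≤ Nat.card V ∧ G.Connected ∧ ∀ v : V, (G.induce {u | u ≠ v}).Connected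


section Helpers

theorem wl_nil (lam : Sym2 V → ZMod 2) {G : SimpleGraph V} {x : V} :
    walkLambda lam (Walk.nil : G.Walk x x) = 0 := by
  simp [walkLambda]

theorem wl_cons (lam : Sym2 V → ZMod 2) {G : SimpleGraph V} {x y z : V} (h : G.Adj x y)
    (w : G.Walk y z) : walkLambda lam (Walk.cons h w) = lam s(x, y) + walkLambda lam w := by
  simp [walkLambda]

theorem wl_append (lam : Sym2 V → ZMod 2) {G : SimpleGraph V} {x y z : V} (v : G.Walk x y)
    (w : G.Walk y z) : walkLambda lam (v.append w) = walkLambda lam v + walkLambda lam w := by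
  simp [walkLambda, Walk.edges_append]

theorem wl_concat (lam : Sym2 V → ZMod 2) {G : SimpleGraph V} {x y z : V} (w : G.Walk x y)
    (h : G.Adj y z) : walkLambda lam (w.concat h) = walkLambda lam w + lam s(y, z) := by
  simp [walkLambda, Walk.edges_concat, List.concat_eq_append]

theorem wl_reverse (lam : Sym2 V → ZMod 2) {G : SimpleGraph V} {x y : V} (w : G.Walk x y) :
    walkLambda lam w.reverse = walkLambda lam w := by
  simp [walkLambda, Walk.edges_reverse, List.sum_reverse]

theorem z2_self (a : ZMod 2) : a + a = 0 := CharTwo.add_self_eq_zero a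

theorem wl_potential (lam : Sym2 V → ZMod 2) {G : SimpleGraph V} (B : G.Subgraph)
    (p : V → ZMod 2) (hp : ∀ x y, B.Adj x y → lam s(x, y) = p x + p y) {x y : V}
    (w : G.Walk x y) (hw : ∀ e ∈ w.edges, e ∈ B.edgeSet) : walkLambda lam w = p x + p y := by
  induction w with
  | nil => rw [wl_nil, z2_self]
  | @cons u v w h q ih =>
    rw [wl_cons, ih (fun e he => hw e (by simp [he])), hp u v (hw s(u, v) (by simp))]
    linear_combination z2_self (p v)

theorem avoid_facts {G : SimpleGraph V} {Zv : Set V} {a c d : V} (w : G.Walk c d)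
    (hw : ∀ u ∈ w.support, u ∉ Zv) (hc : ReachAvoiding G Zv a c) :
    (∀ u ∈ w.support, ReachAvoiding G Zv a u) ∧
    (∀ e ∈ w.edges, ∃ u v, e = s(u, v) ∧ G.Adj u v ∧ ReachAvoiding G Zv a u) := by
  induction w with
  | nil => simp_all
  | @cons u v w h q ih =>
    have hv : ReachAvoiding G Zv a v := by
      obtain ⟨r, hr⟩ := hc
      refine ⟨r.concat h, ?_⟩
      intro t ht
      rw [Walk.support_concat] at ht
      simp only [List.concat_eq_append, List.mem_append, List.mem_singleton] at ht
      rcases ht with ht | rfl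
      · exact hr t ht
      · exact hw _ (by simp)
    obtain ⟨h1, h2⟩ := ih (fun t ht => hw t (by simp [ht])) hv
    constructor
    · intro t ht
      rw [Walk.support_cons, List.mem_cons] at ht
      rcases ht with rfl | ht
      · exact hc
      · exact h1 t ht
    · intro e he
      rw [Walk.edges_cons, List.mem_cons] at he
      rcases he with rfl | he
      · exact ⟨u, v, rfl, h, hc⟩
      · exact h2 e he

theorem reach_notin {G : SimpleGraph V} {Zv : Set V} {a b : V} (h : ReachAvoiding G Zv a b) :
    b ∉ Zv := by
  obtain ⟨w, hw⟩ := h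
  exact hw _ w.end_mem_support

theorem proper_mk {G : SimpleGraph V} {Zv : Set V} {Ze : Set (Sym2 V)} {B : G.Subgraph} {a : V}
    (hZe : ∀ u v, s(u, v) ∈ Ze → u ∈ Zv)
    (hV : B.verts = {b | ReachAvoiding G Zv a b} ∪
        {z | z ∈ Zv ∧ ∃ c, ReachAvoiding G Zv a c ∧ G.Adj c z})
    (hE : ∀ x y, B.Adj x y ↔
        G.Adj x y ∧ (ReachAvoiding G Zv a x ∨ ReachAvoiding G Zv a y))
    {x y c d : V} (hx : x ∈ Zv) (hy : y ∈ Zv) (hxc : G.Adj x c) (hdy : G.Adj d y)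
    (w : G.Walk c d) (hw : ∀ u ∈ w.support, u ∉ Zv) (hc : ReachAvoiding G Zv a c) :
    IsProperWalkIn B Zv Ze (Walk.cons hxc (w.concat hdy)) := by
  obtain ⟨h1, h2⟩ := avoid_facts w hw hc
  have hd := h1 d w.end_mem_support
  have hs : ∀ u ∈ (Walk.cons hxc (w.concat hdy)).support, u = x ∨ u ∈ w.support ∨ u = y := by
    intro u hu
    simpa [Walk.support_concat, List.concat_eq_append] using hu
  have he : ∀ e ∈ (Walk.cons hxc (w.concat hdy)).edges,
      ∃ u v, e = s(u, v) ∧ G.Adj u v ∧ ReachAvoiding G Zv a u := by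
    intro e he
    have : e = s(x, c) ∨ e ∈ w.edges ∨ e = s(d, y) := by
      simpa [Walk.edges_concat, List.concat_eq_append] using he
    rcases this with rfl | he | rfl
    · exact ⟨c, x, Sym2.eq_swap, hxc.symm, hc⟩
    · exact h2 e he
    · exact ⟨d, y, rfl, hdy, hd⟩
  refine ⟨?_, ?_, ?_, ?_⟩
  · intro u hu
    rw [hV]
    rcases hs u hu with rfl | hu | rfl
    · exact Or.inr ⟨hx, c, hc, hxc.symm⟩
    · exact Or.inl (h1 u hu)
    · exact Or.inr ⟨hy, d, hd, hdy⟩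
  · intro e h
    obtain ⟨u, v, rfl, huv, hu⟩ := he e h
    exact (hE u v).2 ⟨huv, Or.inl hu⟩
  · intro u hu huZ
    rcases hs u hu with rfl | hu | rfl
    · exact Or.inl rfl
    · exact absurd huZ (hw u hu)
    · exact Or.inr rfl
  · intro e h hez
    obtain ⟨u, v, rfl, huv, hu⟩ := he e h
    exact reach_notin hu (hZe u v hez)

theorem core {G : SimpleGraph V} (lam : Sym2 V → ZMod 2) {Zv : Set V} {Ze : Set (Sym2 V)}
    {B : G.Subgraph} (hZe : ∀ u v, s(u, v) ∈ Ze → u ∈ Zv) (hB : IsBridgeOf G Zv Ze B)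
    (hno : ∀ x, x ∈ B.verts → x ∈ Zv → ∀ w : G.Walk x x,
      IsProperWalkIn B Zv Ze w → walkLambda lam w = 0) :
    ∃ f : V → ZMod 2, ∀ x y, x ∈ B.verts → x ∈ Zv → y ∈ B.verts → y ∈ Zv →
      ((∃ w : G.Walk x y, IsProperWalkIn B Zv Ze w ∧ walkLambda lam w ≠ 0) ↔ f x ≠ f y) := by
  classical
  suffices H : (∃ p : V → ZMod 2, ∀ x y, B.Adj x y → lam s(x, y) = p x + p y) ∧
      (∀ x y, x ∈ B.verts → x ∈ Zv → y ∈ B.verts → y ∈ Zv → x ≠ y →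
        ∃ w : G.Walk x y, IsProperWalkIn B Zv Ze w) ∨ (∀ x ∈ B.verts, x ∉ Zv) by
    rcases H with ⟨⟨p, hp⟩, hw⟩ | H
    · refine ⟨p, fun x y hx hxZ hy hyZ => ?_⟩
      have key : ∀ w : G.Walk x y, IsProperWalkIn B Zv Ze w → (walkLambda lam w ≠ 0 ↔ p x ≠ p y) := by
        intro w hw
        rw [wl_potential lam B p hp w hw.2.1, not_iff_not, CharTwo.add_eq_zero]
      constructor
      · rintro ⟨w, hw, h⟩
        exact (key w hw).1 h
      · intro h
        obtain ⟨w, hw⟩ := hw x y hx hxZ hy hyZ (fun e => h (by rw [e]))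
        exact ⟨w, hw, (key w hw).2 h⟩
    · exact ⟨0, fun x y hx hxZ => absurd hxZ (H x hx)⟩
  rcases hB with ⟨u, v, huv, he, hu, hv, hV, hE⟩ | ⟨a, ha, hV, hE⟩
  · left
    constructor
    · refine ⟨fun t => if t = u then lam s(u, v) else 0, fun x y h => ?_⟩
      have := (hE x y).1 h
      have hne := huv.ne
      rw [this]
      rcases Sym2.eq_iff.1 this with ⟨rfl, rfl⟩ | ⟨rfl, rfl⟩ <;> simp [hne.symm]
    · intro x y hx _ hy _ hxy
      have hs : s(x, y) = s(u, v) := by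
        rw [hV] at hx hy
        rcases hx with rfl | rfl <;> rcases hy with rfl | rfl
        · exact absurd rfl hxy
        · rfl
        · exact Sym2.eq_swap
        · exact absurd rfl hxy
      have hBa := (hE x y).2 hs
      refine ⟨Walk.cons hBa.adj_sub Walk.nil, ?_, ?_, ?_, ?_⟩
      · intro t ht
        have : t = x ∨ t = y := by simpa using ht
        rcases this with rfl | rfl <;> assumption
      · intro e h
        have : e = s(x, y) := by simpa using h
        rw [this]; exact hBa
      · intro t ht _
        simpa using ht
      · intro e h
        have : e = s(x, y) := by simpa using h
        rw [this, hs]; exact he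
  · by_cases hat : ∀ x ∈ B.verts, x ∉ Zv
    · exact Or.inr hat
    left
    push Not at hat
    obtain ⟨x₀, hx₀B, hx₀⟩ := hat
    have att : ∀ x ∈ B.verts, x ∈ Zv → ∃ c, ReachAvoiding G Zv a c ∧ G.Adj c x := by
      intro x hx hxZ
      rw [hV] at hx
      rcases hx with hx | hx
      · exact absurd hxZ (reach_notin hx)
      · exact hx.2
    have app : ∀ {c d e : V} (w : G.Walk c d) (w' : G.Walk d e), (∀ u ∈ w.support, u ∉ Zv) →
        (∀ u ∈ w'.support, u ∉ Zv) → ∀ u ∈ (w.append w').support, u ∉ Zv := by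
      intro c d e w w' h h' u hu
      rcases (Walk.mem_support_append_iff w w').1 hu with hu | hu
      · exact h u hu
      · exact h' u hu
    have rev : ∀ {c d : V} (w : G.Walk c d), (∀ u ∈ w.support, u ∉ Zv) →
        (∀ u ∈ w.reverse.support, u ∉ Zv) := by
      intro c d w h u hu
      exact h u (by simpa using hu)
    constructor
    · have hclosed : ∀ w : G.Walk a a, (∀ u ∈ w.support, u ∉ Zv) → walkLambda lam w = 0 := by
        intro w hw
        obtain ⟨c, ⟨q, hq⟩, hc⟩ := att x₀ hx₀B hx₀
        have := hno x₀ hx₀B hx₀ _ (proper_mk (Ze := Ze) hZe hV hE hx₀ hx₀ hc.symm hc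
          (q.reverse.append (w.append q)) (app _ _ (rev _ hq) (app _ _ hw hq)) ⟨q, hq⟩)
        rw [wl_cons, wl_concat, wl_append, wl_append, wl_reverse, Sym2.eq_swap (a := x₀)] at this
        linear_combination this - z2_self (walkLambda lam q) - z2_self (lam s(c, x₀))
      let RV : V → ZMod 2 → Prop := fun b t =>
        (b ∉ Zv ∧ ∃ w : G.Walk a b, (∀ u ∈ w.support, u ∉ Zv) ∧ walkLambda lam w = t) ∨
        (b ∈ Zv ∧ ∃ (c : V) (w : G.Walk a c), (∀ u ∈ w.support, u ∉ Zv) ∧ G.Adj c b ∧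
          walkLambda lam w + lam s(c, b) = t)
      have huniq : ∀ b t t', RV b t → RV b t' → t = t' := by
        intro b t t' h h'
        rcases h with ⟨hb, w, hw, rfl⟩ | ⟨hb, c, w, hw, hc, rfl⟩
        · rcases h' with ⟨_, w', hw', rfl⟩ | ⟨hb', _⟩
          · have := hclosed (w.append w'.reverse) (app _ _ hw (rev _ hw'))
            rw [wl_append, wl_reverse] at this
            exact CharTwo.add_eq_zero.1 this
          · exact absurd hb' hb
        · rcases h' with ⟨hb', _⟩ | ⟨_, c', w', hw', hc', rfl⟩
          · exact absurd hb hb'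
          · have hbB : b ∈ B.verts := by
              rw [hV]; exact Or.inr ⟨hb, c, ⟨w, hw⟩, hc⟩
            have := hno b hbB hb _ (proper_mk (Ze := Ze) hZe hV hE hb hb hc.symm hc'
              (w.reverse.append w') (app _ _ (rev _ hw) hw') ⟨w, hw⟩)
            rw [wl_cons, wl_concat, wl_append, wl_reverse, Sym2.eq_swap (a := b)] at this
            apply CharTwo.add_eq_zero.1
            linear_combination this
      have hp : ∃ p : V → ZMod 2, ∀ b t, RV b t → p b = t := by
        refine ⟨fun b => if h : ∃ t, RV b t then h.choose else 0, fun b t h => ?_⟩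
        have hex : ∃ t, RV b t := ⟨t, h⟩
        simp only [hex, dif_pos]
        exact huniq _ _ _ hex.choose_spec h
      obtain ⟨p, hp⟩ := hp
      have hedge : ∀ x y, G.Adj x y → ReachAvoiding G Zv a x → lam s(x, y) = p x + p y := by
        rintro x y hxy ⟨q, hq⟩
        have hxZ : x ∉ Zv := hq _ q.end_mem_support
        have h1 := hp x _ (Or.inl ⟨hxZ, q, hq, rfl⟩)
        have h2 : p y = walkLambda lam q + lam s(x, y) := by
          by_cases hy : y ∈ Zv
          · exact hp y _ (Or.inr ⟨hy, x, q, hq, hxy, rfl⟩)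
          · refine hp y _ (Or.inl ⟨hy, q.concat hxy, ?_, wl_concat _ _ _⟩)
            intro t ht
            rw [Walk.support_concat] at ht
            simp only [List.concat_eq_append, List.mem_append, List.mem_singleton] at ht
            rcases ht with ht | rfl
            · exact hq t ht
            · exact hy
        rw [h1, h2]
        linear_combination - z2_self (walkLambda lam q)
      refine ⟨p, fun x y h => ?_⟩
      obtain ⟨hxy, h | h⟩ := (hE x y).1 h
      · exact hedge x y hxy h
      · rw [Sym2.eq_swap, add_comm]
        exact hedge y x hxy.symm h
    · intro x y hx hxZ hy hyZ _
      obtain ⟨c, ⟨q, hq⟩, hc⟩ := att x hx hxZ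
      obtain ⟨d, ⟨r, hr⟩, hd⟩ := att y hy hyZ
      exact ⟨_, proper_mk (Ze := Ze) hZe hV hE hxZ hyZ hc.symm hd
        (q.reverse.append r) (app _ _ (rev _ hq) hr) ⟨q, hq⟩⟩

end Helpers

/-- If a bridge `B` induces no loop (every proper closed walk in `B` based
at a vertex of `V(B) ∩ V(Z)` is trivial), then there is a `ℤ/2`-valued function `f` on
the vertices such that, for `x, y ∈ V(B) ∩ V(Z)`, a nontrivial proper walk in `B` from
`x` to `y` exists iff `f x ≠ f y`; i.e., the arrows induced by `B` form a complete
bipartite graph. -/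
theorem statement6 [Fintype V] (G : SimpleGraph V) (lam : Sym2 V → ZMod 2)
    (z₀ : V) (Z : G.Walk z₀ z₀) (hZ : Z.IsCycle) (B : G.Subgraph)
    (hB : IsBridgeOf G {u | u ∈ Z.support} {e | e ∈ Z.edges} B)
    (hnoloop : ∀ x, x ∈ B.verts → x ∈ Z.support → ∀ w : G.Walk x x,
      IsProperWalkIn B {u | u ∈ Z.support} {e | e ∈ Z.edges} w → walkLambda lam w = 0) :
    ∃ f : V → ZMod 2, ∀ x y, x ∈ B.verts → x ∈ Z.support → y ∈ B.verts → y ∈ Z.support →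
      ((∃ w : G.Walk x y, IsProperWalkIn B {u | u ∈ Z.support} {e | e ∈ Z.edges} w ∧
          walkLambda lam w ≠ 0) ↔ f x ≠ f y) := by
  exact core lam (fun u v h => Z.fst_mem_support_of_mem_edges h) hB hnoloop
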